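/- One-dimensional surgery estimate: Let ω be a locally finite positive Borel measure on ℝ, let J and R be intervals that are ρ-close (2^{−ρ}ℓ(R) ≤ ℓ(J) ≤ 2^{ρ}ℓ(R), J ⊂ 3R or R ⊂ 3J, touching or contained), and let λ ∈ (0,1/2). Let (J+γ)_λ^{left} = (J+γ)_− ∖ (J+γ)_λ be the left boundary piece of width λℓ(J), where (J+γ)_− is the left half of J+γ. Then the average over translations γ of step λℓ(J) satisfies (1/Λ) Σ_γ ∫_{(J+γ)_λ^{left}} |Δ_{J+γ}^ω 1_R|² dω ≤ C √λ ω(R), where Λ is the number of translations and C depends only on ρ. The same bound holds for the right boundary pieces. -/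

import Mathlib

open MeasureTheory Set Filter Topology
open scoped ENNReal NNReal Classical

noncomputable section

/-- Euclidean space `ℝⁿ`. -/
abbrev Pt (n : ℕ) : Type := EuclideanSpace ℝ (Fin n)

/-- An axis-parallel half-open cube in `ℝⁿ`, given by its corner `c` and positive
side length `l`. -/
structure Cube (n : ℕ) : Type where
  c : Pt n
  l : ℝ
  lpos : 0 < l

namespace Cube

variable {n : ℕ}

/-- The underlying (half-open) set of the cube. -/
def set (Q : Cube n) : Set (Pt n) := {x | ∀ i, Q.c i ≤ x i ∧ x i < Q.c i + Q.l}

/-- The center of the cube. -/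
def center (Q : Cube n) : Pt n := WithLp.toLp 2 fun i => Q.c i + Q.l / 2

/-- The concentric triple `3Q`. -/
def tri (Q : Cube n) : Cube n := ⟨WithLp.toLp 2 fun i => Q.c i - Q.l, 3 * Q.l, by have := Q.lpos; linarith⟩

/-- The dyadic child of a cube indexed by `e : Fin n → Bool`. -/
def child (Q : Cube n) (e : Fin n → Bool) : Cube n :=
  ⟨WithLp.toLp 2 fun i => Q.c i + (if e i then Q.l / 2 else 0), Q.l / 2, by have := Q.lpos; linarith⟩

/-- The translate `Q + γ` of a cube. -/
def trans (Q : Cube n) (γ : Pt n) : Cube n := ⟨WithLp.toLp 2 fun i => Q.c i + γ i, Q.l, Q.lpos⟩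

/-- The `λ`-interior `Q_λ = {x ∈ Q : dist(x,∂Q) > λ ℓ(Q)}` of a cube. -/
def inn (Q : Cube n) (lam : ℝ) : Set (Pt n) :=
  {x ∈ Q.set | lam * Q.l < Metric.infDist x (frontier Q.set)}

end Cube

/-- The distance between two sets, as an extended nonnegative real. -/
def sDistE {n : ℕ} (s t : Set (Pt n)) : ℝ≥0∞ := ⨅ (x ∈ s) (y ∈ t), edist x y

/-- Side lengths comparable within a factor `Cc` : `1/Cc ≤ ℓ(Q)/ℓ(Q') ≤ Cc`. -/
def sideComp {n : ℕ} (Cc : ℝ) (Q Q' : Cube n) : Prop := Q.l ≤ Cc * Q'.l ∧ Q'.l ≤ Cc * Q.l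

/-- Two cubes touch if their closures intersect, and the intersection is contained in
the boundary of the larger cube. -/
def Touching {n : ℕ} (Q R : Cube n) : Prop :=
  (closure Q.set ∩ closure R.set).Nonempty ∧
  (Q.l ≤ R.l → closure Q.set ∩ closure R.set ⊆ frontier R.set) ∧
  (R.l ≤ Q.l → closure Q.set ∩ closure R.set ⊆ frontier Q.set)

/-- The indicator function of a set. -/
def indic {n : ℕ} (s : Set (Pt n)) : Pt n → ℝ := s.indicator 1

/-- A standard `α`-fractional Calderón–Zygmund kernel in `ℝⁿ`: size and smoothness of
order `1 + δ`, for the kernel and its adjoint. -/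
structure CZKernel (n : ℕ) (α : ℝ) : Type where
  K : Pt n → Pt n → ℝ
  C₀ : ℝ
  Cpos : 0 < C₀
  δ : ℝ
  δpos : 0 < δ
  size : ∀ x y : Pt n, x ≠ y → |K x y| ≤ C₀ * ‖x - y‖ ^ (α - n)
  gradSize : ∀ x y : Pt n, x ≠ y →
    ‖fderiv ℝ (fun z => K z y) x‖ ≤ C₀ * ‖x - y‖ ^ (α - n - 1)
  gradHolder : ∀ x x' y : Pt n, x ≠ y → ‖x - x'‖ ≤ ‖x - y‖ / 2 →
    ‖fderiv ℝ (fun z => K z y) x - fderiv ℝ (fun z => K z y) x'‖ ≤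
      C₀ * (‖x - x'‖ / ‖x - y‖) ^ δ * ‖x - y‖ ^ (α - n - 1)
  gradSizeAdj : ∀ x y : Pt n, x ≠ y →
    ‖fderiv ℝ (fun z => K x z) y‖ ≤ C₀ * ‖x - y‖ ^ (α - n - 1)
  gradHolderAdj : ∀ x y y' : Pt n, x ≠ y → ‖y - y'‖ ≤ ‖x - y‖ / 2 →
    ‖fderiv ℝ (fun z => K x z) y - fderiv ℝ (fun z => K x z) y'‖ ≤
      C₀ * (‖y - y'‖ / ‖x - y‖) ^ δ * ‖x - y‖ ^ (α - n - 1)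

/-- A (tangent line type) truncation of a CZ kernel: a bounded kernel, vanishing on the
diagonal, compactly supported, agreeing with `K` in the annulus `d ≤ |x-y| ≤ r`. -/
structure Truncation {n : ℕ} {α : ℝ} (K : CZKernel n α) : Type where
  Kt : Pt n → Pt n → ℝ
  d : ℝ
  r : ℝ
  dpos : 0 < d
  dlt : d < r
  bounded : ∃ M, ∀ x y, |Kt x y| ≤ M
  diag : ∀ x, Kt x x = 0
  agrees : ∀ x y : Pt n, d ≤ ‖x - y‖ → ‖x - y‖ ≤ r → Kt x y = K.K x y
  compactsupp : ∃ S, ∀ x y : Pt n, S ≤ ‖x - y‖ → Kt x y = 0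

/-- The truncated operator `T^α_μ f (x) = ∫ K_t(x,y) f(y) dμ(y)`. -/
def Truncation.op {n : ℕ} {α : ℝ} {K : CZKernel n α} (τ : Truncation K)
    (μ : Measure (Pt n)) (f : Pt n → ℝ) (x : Pt n) : ℝ := ∫ y, τ.Kt x y * f y ∂μ

/-- The truncated dual operator `(T^α)^*_μ g (x) = ∫ K_t(y,x) g(y) dμ(y)`. -/
def Truncation.opAdj {n : ℕ} {α : ℝ} {K : CZKernel n α} (τ : Truncation K)
    (μ : Measure (Pt n)) (g : Pt n → ℝ) (x : Pt n) : ℝ := ∫ y, τ.Kt y x * g y ∂μ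

/-- The two-weight norm constant `𝔑_{T^α}(σ,ω)`, uniform over all truncations. -/
def normConst {n : ℕ} {α : ℝ} (K : CZKernel n α) (σ ω : Measure (Pt n)) : ℝ≥0∞ :=
  sInf {N : ℝ≥0∞ | ∀ τ : Truncation K, ∀ f : Pt n → ℝ,
    ∫⁻ x, ENNReal.ofReal ((τ.op σ f x) ^ 2) ∂ω ≤ N ^ 2 * ∫⁻ x, ENNReal.ofReal ((f x) ^ 2) ∂σ}

/-- The (quasi)cube `Ω Q` associated to a cube `Q` and a globally biLipschitz map `Ω`;
for ordinary cubes take `Ω = id`. -/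
def qset {n : ℕ} (Om : Pt n → Pt n) (Q : Cube n) : Set (Pt n) := Om '' Q.set

/-- The (quasi)cube testing constant `𝔗_{T^α}(σ,ω)`, uniform over all truncations. -/
def testConst {n : ℕ} {α : ℝ} (Om : Pt n → Pt n) (K : CZKernel n α)
    (σ ω : Measure (Pt n)) : ℝ≥0∞ :=
  sInf {T : ℝ≥0∞ | ∀ τ : Truncation K, ∀ Q : Cube n,
    ∫⁻ x in qset Om Q, ENNReal.ofReal ((τ.op σ (indic (qset Om Q)) x) ^ 2) ∂ω ≤
      T ^ 2 * σ (qset Om Q)}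

/-- The dual (quasi)cube testing constant `𝔗^*_{T^α}(σ,ω)`. -/
def testConstDual {n : ℕ} {α : ℝ} (Om : Pt n → Pt n) (K : CZKernel n α)
    (σ ω : Measure (Pt n)) : ℝ≥0∞ :=
  sInf {T : ℝ≥0∞ | ∀ τ : Truncation K, ∀ Q : Cube n,
    ∫⁻ x in qset Om Q, ENNReal.ofReal ((τ.opAdj ω (indic (qset Om Q)) x) ^ 2) ∂σ ≤
      T ^ 2 * ω (qset Om Q)}

/-- The weak boundedness constant `𝒲ℬ𝒫_{T^α}(σ,ω)` with comparability constant `Cc`. -/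
def wbpConst {n : ℕ} {α : ℝ} (K : CZKernel n α) (Cc : ℝ) (σ ω : Measure (Pt n)) : ℝ≥0∞ :=
  sInf {W : ℝ≥0∞ | ∀ τ : Truncation K, ∀ Q Q' : Cube n, sideComp Cc Q Q' →
    (Q.set ⊆ Q'.tri.set \ Q'.set ∨ Q'.set ⊆ Q.tri.set \ Q.set) →
    ENNReal.ofReal |∫ x in Q.set, τ.op σ (indic Q'.set) x ∂ω| ≤
      W * (ω Q.set) ^ (1/2 : ℝ) * (σ Q'.set) ^ (1/2 : ℝ)}

/-- The indicator/touching constant `𝔍_{T^α}(σ,ω)` with comparability constant `Cc`. -/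
def indTouchConst {n : ℕ} {α : ℝ} (K : CZKernel n α) (Cc : ℝ) (σ ω : Measure (Pt n)) : ℝ≥0∞ :=
  sInf {Jc : ℝ≥0∞ | ∀ τ : Truncation K, ∀ Q Q' : Cube n, Touching Q Q' → sideComp Cc Q Q' →
    (Q.set ⊆ Q'.tri.set \ Q'.set ∨ Q'.set ⊆ Q.tri.set \ Q.set) →
    ENNReal.ofReal |∫ x in Q'.set, τ.op σ (indic Q.set) x ∂ω| ≤
      Jc * (σ Q.set) ^ (1/2 : ℝ) * (ω Q'.set) ^ (1/2 : ℝ)}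

/-- The reproducing Poisson integral `𝒫^α(ΩQ, μ)`. -/
def repPoisson {n : ℕ} (α : ℝ) (Om : Pt n → Pt n) (Q : Cube n) (μ : Measure (Pt n)) : ℝ≥0∞ :=
  ∫⁻ x, ENNReal.ofReal ((Q.l / (Q.l + ‖x - Om Q.center‖) ^ 2) ^ ((n : ℝ) - α)) ∂μ

/-- The standard Poisson integral `P^α(ΩQ, μ)`. -/
def stdPoisson {n : ℕ} (α : ℝ) (Om : Pt n → Pt n) (Q : Cube n) (μ : Measure (Pt n)) : ℝ≥0∞ :=
  ∫⁻ x, ENNReal.ofReal (Q.l / (Q.l + ‖x - Om Q.center‖) ^ ((n : ℝ) + 1 - α)) ∂μ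

/-- The one-tailed Muckenhoupt constant `𝒜₂^α(σ,ω)`. -/
def a2tail {n : ℕ} (α : ℝ) (Om : Pt n → Pt n) (σ ω : Measure (Pt n)) : ℝ≥0∞ :=
  ⨆ Q : Cube n, repPoisson α Om Q (σ.restrict (qset Om Q)ᶜ) * ω (qset Om Q) /
    ENNReal.ofReal (Q.l ^ ((n : ℝ) - α))

/-- The set of common point masses of `σ` and `ω`. -/
def commonAtoms {n : ℕ} (σ ω : Measure (Pt n)) : Set (Pt n) := {p | 0 < σ {p} ∧ 0 < ω {p}}

/-- The punctured mass `ω(Q, 𝔓_{(σ,ω)})`. -/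
def punctMass {n : ℕ} (σ ω : Measure (Pt n)) (Om : Pt n → Pt n) (Q : Cube n) : ℝ≥0∞ :=
  ω (qset Om Q) - ⨆ p ∈ qset Om Q ∩ commonAtoms σ ω, ω {p}

/-- The punctured Muckenhoupt constant `A₂^{α,punct}(σ,ω)`. -/
def a2punct {n : ℕ} (α : ℝ) (Om : Pt n → Pt n) (σ ω : Measure (Pt n)) : ℝ≥0∞ :=
  ⨆ Q : Cube n, (punctMass σ ω Om Q / ENNReal.ofReal (Q.l ^ ((n : ℝ) - α))) *
    (σ (qset Om Q) / ENNReal.ofReal (Q.l ^ ((n : ℝ) - α)))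

/-- The full Muckenhoupt constant `𝔄₂^α = 𝒜₂^α + 𝒜₂^{α,*} + A₂^{α,punct} + A₂^{α,*,punct}`. -/
def muckA2 {n : ℕ} (α : ℝ) (Om : Pt n → Pt n) (σ ω : Measure (Pt n)) : ℝ≥0∞ :=
  a2tail α Om σ ω + a2tail α Om ω σ + a2punct α Om σ ω + a2punct α Om ω σ

/-- The dyadic cube of the grid translated by `t`, of scale `k` and position `m`. -/
def dCube {n : ℕ} (t : Pt n) (k : ℤ) (m : Fin n → ℤ) : Cube n :=
  ⟨WithLp.toLp 2 fun i => t i + (2:ℝ) ^ k * m i, (2:ℝ) ^ k, by positivity⟩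

/-- The dyadic grid with origin `t`. -/
def gridCubes {n : ℕ} (t : Pt n) : Set (Cube n) := {Q | ∃ k m, Q = dCube t k m}

/-- Alternate dyadic cubes: unions of `2ⁿ` grid cubes of half the side length. -/
def altCubes {n : ℕ} (t : Pt n) : Set (Cube n) :=
  {Q | ∃ (k : ℤ) (m : Fin n → ℤ), Q.l = (2:ℝ) ^ k ∧ ∀ i, Q.c i = t i + (2:ℝ) ^ (k - 1) * m i}

/-- The `μ`-average of `f` over `s`. -/
def cubeAvg {n : ℕ} (μ : Measure (Pt n)) (s : Set (Pt n)) (f : Pt n → ℝ) : ℝ :=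
  (∫ x in s, f x ∂μ) / (μ s).toReal

/-- The martingale (Haar) difference `Δ_Q^μ f`. -/
def haarDiff {n : ℕ} (μ : Measure (Pt n)) (Q : Cube n) (f : Pt n → ℝ) (x : Pt n) : ℝ :=
  ∑ e : Fin n → Bool,
    Set.indicator (Q.child e).set (fun _ => cubeAvg μ (Q.child e).set f - cubeAvg μ Q.set f) x

/-- `J` is `(r,ε)`-deeply embedded in `K`. -/
def deepEmb {n : ℕ} (r : ℕ) (ε : ℝ) (J K : Cube n) : Prop :=
  J.set ⊆ K.set ∧ (2:ℝ) ^ r * J.l ≤ K.l ∧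
    ENNReal.ofReal (J.l ^ ε * K.l ^ (1 - ε) / 2) ≤ sDistE J.set (frontier K.set)

/-- The maximal `(r,ε)`-deeply embedded dyadic subcubes of `K` from the grid `t`. -/
def maxDeep {n : ℕ} (r : ℕ) (ε : ℝ) (t : Pt n) (K : Cube n) : Set (Cube n) :=
  {J | J ∈ gridCubes t ∧ deepEmb r ε J K ∧
    ∀ J' ∈ gridCubes t, J.set ⊆ J'.set → deepEmb r ε J' K → J' = J}

/-- The grid children of a (possibly alternate) cube `K`. -/
def gridChildren {n : ℕ} (t : Pt n) (K : Cube n) : Set (Cube n) :=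
  {K' | K' ∈ gridCubes t ∧ K'.l = K.l / 2 ∧ K'.set ⊆ K.set}

/-- `P = π^ℓ K'` is the `ℓ`-fold grid ancestor of `K'`. -/
def gridAncestor {n : ℕ} (t : Pt n) (lev : ℕ) (K' P : Cube n) : Prop :=
  P ∈ gridCubes t ∧ P.l = (2:ℝ) ^ lev * K'.l ∧ K'.set ⊆ P.set

/-- The refinement `M^ℓ_{(r,ε)-deep,𝒟}(K)` of the maximal deeply embedded collection. -/
def maxDeepRef {n : ℕ} (r : ℕ) (ε : ℝ) (t : Pt n) (lev : ℕ) (K : Cube n) : Set (Cube n) :=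
  {J | (∃ K' ∈ gridChildren t K, ∃ P : Cube n, gridAncestor t lev K' P ∧ J ∈ maxDeep r ε t P) ∧
       ∃ L ∈ maxDeep r ε t K, J.set ⊆ L.set}

/-- The `ω`-average (barycenter) of the identity over the quasicube `Ω J`. -/
def cubeAvgVec {n : ℕ} (Om : Pt n → Pt n) (ω : Measure (Pt n)) (J : Cube n) : Pt n :=
  ((ω (qset Om J)).toReal)⁻¹ • ∫ x in qset Om J, x ∂ω

/-- The energy `‖P^ω_{ΩJ} x‖²_{L²(ω)} = ∫_{ΩJ} |x - E_{ΩJ}^ω x|² dω`. -/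
def energyTerm {n : ℕ} (Om : Pt n → Pt n) (ω : Measure (Pt n)) (J : Cube n) : ℝ≥0∞ :=
  ∫⁻ x in qset Om J, ENNReal.ofReal (‖x - cubeAvgVec Om ω J‖ ^ 2) ∂ω

/-- The energy sum `Σ_{J ∈ 𝒥} (P^α(J, 1_I σ)/ℓ(J))² ‖P_J^ω x‖²`. -/
def energySum {n : ℕ} (α : ℝ) (Om : Pt n → Pt n) (σ ω : Measure (Pt n)) (I : Cube n)
    (𝒥 : Set (Cube n)) : ℝ≥0∞ :=
  ∑' J : 𝒥, (stdPoisson α Om (J : Cube n) (σ.restrict (qset Om I)) /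
      ENNReal.ofReal ((J : Cube n).l)) ^ 2 * energyTerm Om ω (J : Cube n)

/-- `Ir` is a partition of `I` into dyadic subcubes from the grid `t`. -/
def isGridPartition {n : ℕ} (t : Pt n) (I : Cube n) (Ir : ℕ → Cube n) : Prop :=
  (∀ k, Ir k ∈ gridCubes t) ∧ (∀ k, (Ir k).set ⊆ I.set) ∧
  (∀ k k', k ≠ k' → Disjoint (Ir k).set (Ir k').set) ∧ (⋃ k, (Ir k).set) = I.set

/-- The strong energy constant `ℰ_α^{strong}(σ,ω)` with goodness parameters `r, ε`. -/
def strongEnergy {n : ℕ} (r : ℕ) (ε α : ℝ) (Om : Pt n → Pt n) (σ ω : Measure (Pt n)) : ℝ≥0∞ :=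
  sInf {E : ℝ≥0∞ |
    (∀ (t : Pt n) (I : Cube n), I ∈ gridCubes t → ∀ Ir : ℕ → Cube n, isGridPartition t I Ir →
      (∑' k : ℕ, energySum α Om σ ω I (maxDeep r ε t (Ir k))) ≤ E ^ 2 * σ (qset Om I)) ∧
    (∀ (t : Pt n) (I : Cube n), I ∈ altCubes t → ∀ lev : ℕ,
      energySum α Om σ ω I (maxDeepRef r ε t lev I) ≤ E ^ 2 * σ (qset Om I))}

/-- The translation `γ` of step `2^{-M}` indexed by `idx`. -/
def gamOf {n : ℕ} (M : ℕ) {Kc : ℕ} (idx : Fin n → Fin Kc) : Pt n :=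
  WithLp.toLp 2 fun i => (idx i : ℝ) * (2:ℝ) ^ (-(M : ℤ))

/-- The truncated dyadic grid built on `𝔻_M`, of size `2^{-N}`, translated by `γ`. -/
def truncGrid {n : ℕ} (M : ℕ) (N : ℤ) (γ : Pt n) : Set (Cube n) :=
  {Q | ∃ (k : ℤ) (m : Fin n → ℤ), -(M : ℤ) ≤ k ∧ k ≤ -N ∧ Q = dCube γ k m}

/-- The siblings of `Q`: the `3ⁿ` triadic children of `3Q`. -/
def siblings {n : ℕ} (Q : Cube n) : Set (Cube n) :=
  {Q' | ∃ a : Fin n → Fin 3, Q'.l = Q.l ∧ ∀ i, Q'.c i = Q.c i + ((a i : ℝ) - 1) * Q.l}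

/-- A grid `𝒟` is `Q`-good for the goodness parameters `r, ε`. -/
def QGoodGrid {n : ℕ} (r : ℕ) (ε : ℝ) (Q : Cube n) (𝒟 : Set (Cube n)) : Prop :=
  ∀ Q' ∈ siblings Q, ∀ I ∈ 𝒟, (2:ℝ) ^ r * Q.l ≤ I.l →
    ENNReal.ofReal (Q'.l ^ ε * I.l ^ (1 - ε) / 2) ≤ sDistE Q'.set (frontier I.set)

/-- A cube `I` is `r`-good in the grid `𝒟`. -/
def rGoodIn {n : ℕ} (r : ℕ) (ε : ℝ) (I : Cube n) (𝒟 : Set (Cube n)) : Prop :=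
  ∀ K ∈ 𝒟, (2:ℝ) ^ r * I.l ≤ K.l →
    ENNReal.ofReal (I.l ^ ε * K.l ^ (1 - ε) / 2) ≤ sDistE I.set (frontier K.set)

/-- The good projection `P^μ_{Q;good} f` relative to the grid `𝒟`. -/
def projGood {n : ℕ} (r : ℕ) (ε : ℝ) (Q : Cube n) (𝒟 : Set (Cube n)) (μ : Measure (Pt n))
    (f : Pt n → ℝ) (x : Pt n) : ℝ :=
  if QGoodGrid r ε Q 𝒟 then
    ∑' I : {I : Cube n // I ∈ 𝒟 ∧ rGoodIn r ε I 𝒟}, haarDiff μ (I : Cube n) f x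
  else 0

/-- The bad projection `P^μ_{Q;bad} f = f - P^μ_{Q;good} f`. -/
def projBad {n : ℕ} (r : ℕ) (ε : ℝ) (Q : Cube n) (𝒟 : Set (Cube n)) (μ : Measure (Pt n))
    (f : Pt n → ℝ) (x : Pt n) : ℝ := f x - projGood r ε Q 𝒟 μ f x

/-- An 'appropriate' function: supported in a cube `L` with mean zero, with `−N > ℓ(L) + r`,
and constant on the tiles of `𝔻_M`. -/
def Appropriate {n : ℕ} (μ : Measure (Pt n)) (M : ℕ) (N : ℤ) (r : ℕ) (f : Pt n → ℝ) : Prop :=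
  ∃ L : Cube n, (∀ x, x ∉ L.set → f x = 0) ∧ (∫ x in L.set, f x ∂μ) = 0 ∧
    L.l + (r : ℝ) < (-N : ℝ) ∧
    ∀ m : Fin n → ℤ, ∀ x ∈ (dCube 0 (-(M : ℤ)) m).set, ∀ y ∈ (dCube 0 (-(M : ℤ)) m).set, f x = f y

/-- Pairs `(I,J)` of grid cubes with `J ⊂ 3I` and `ρ`-comparable side lengths. -/
def pairsNear {n : ℕ} (t : Pt n) (ρ : ℕ) : Set (Cube n × Cube n) :=
  {p | p.1 ∈ gridCubes t ∧ p.2 ∈ gridCubes t ∧ p.2.set ⊆ p.1.tri.set ∧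
       (2:ℝ) ^ (-(ρ:ℤ)) * p.1.l ≤ p.2.l ∧ p.2.l ≤ (2:ℝ) ^ (ρ:ℤ) * p.1.l}

/-- Pairs `(I,J)` of grid cubes with `I ⊂ 3J` and `ρ`-comparable side lengths. -/
def pairsNear' {n : ℕ} (t : Pt n) (ρ : ℕ) : Set (Cube n × Cube n) :=
  {p | p.1 ∈ gridCubes t ∧ p.2 ∈ gridCubes t ∧ p.1.set ⊆ p.2.tri.set ∧
       (2:ℝ) ^ (-(ρ:ℤ)) * p.1.l ≤ p.2.l ∧ p.2.l ≤ (2:ℝ) ^ (ρ:ℤ) * p.1.l}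

/-- The inner product `⟨T^α_σ Δ_I^σ f, Δ_J^ω g⟩_ω`. -/
def innerTT {n : ℕ} {α : ℝ} {K : CZKernel n α} (τ : Truncation K) (σ ω : Measure (Pt n))
    (I J : Cube n) (f g : Pt n → ℝ) : ℝ :=
  ∫ x, τ.op σ (haarDiff σ I f) x * haarDiff ω J g x ∂ω

/-- The form `A₁(f,g)`, summing over comparable nearby pairs with `J ⊂ 3I`. -/
def formA1 {n : ℕ} {α : ℝ} {K : CZKernel n α} (τ : Truncation K) (σ ω : Measure (Pt n))
    (t : Pt n) (ρ : ℕ) (f g : Pt n → ℝ) : ℝ :=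
  ∑' p : pairsNear t ρ, innerTT τ σ ω p.1.1 p.1.2 f g

/-- The form `A₂(f,g)`, summing over comparable nearby pairs with `I ⊂ 3J`. -/
def formA2 {n : ℕ} {α : ℝ} {K : CZKernel n α} (τ : Truncation K) (σ ω : Measure (Pt n))
    (t : Pt n) (ρ : ℕ) (f g : Pt n → ℝ) : ℝ :=
  ∑' p : pairsNear' t ρ, innerTT τ σ ω p.1.1 p.1.2 f g

/-- `I` and `J` are `r`-close in the grid `t`: comparable side lengths, touching,
and one contained in the triple of the other. -/
def rClosePairs {n : ℕ} (t : Pt n) (r : ℕ) : Set (Cube n × Cube n) :=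
  {p | p.1 ∈ gridCubes t ∧ p.2 ∈ gridCubes t ∧
       (2:ℝ) ^ (-(r:ℤ)) * p.1.l ≤ p.2.l ∧ p.2.l ≤ (2:ℝ) ^ (r:ℤ) * p.1.l ∧
       Touching p.1 p.2 ∧ (p.1.set ⊆ p.2.tri.set ∨ p.2.set ⊆ p.1.tri.set)}

/-- The bilinear form `ℬ(f,g) = ⟨T_σ^α f, g⟩_ω`. -/
def formB {n : ℕ} {α : ℝ} {K : CZKernel n α} (τ : Truncation K) (σ ω : Measure (Pt n))
    (f g : Pt n → ℝ) : ℝ := ∫ x, τ.op σ f x * g x ∂ω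

/-- The bilinear form `𝒞_𝒟(f,g)`, summing over `r`-close pairs in the grid. -/
def formC {n : ℕ} {α : ℝ} {K : CZKernel n α} (τ : Truncation K) (σ ω : Measure (Pt n))
    (t : Pt n) (r : ℕ) (f g : Pt n → ℝ) : ℝ :=
  ∑' p : rClosePairs t r, innerTT τ σ ω p.1.1 p.1.2 f g

/-- The subbilinear form `𝒮_𝒟(f,g)`, summing absolute values over `r`-close pairs. -/
def formS {n : ℕ} {α : ℝ} {K : CZKernel n α} (τ : Truncation K) (σ ω : Measure (Pt n))
    (t : Pt n) (r : ℕ) (f g : Pt n → ℝ) : ℝ≥0∞ :=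
  ∑' p : rClosePairs t r, ENNReal.ofReal |innerTT τ σ ω p.1.1 p.1.2 f g|

/-- Two cubes are `ρ`-close: `ρ`-comparable side lengths, in a common grid, touching, and
one contained in the triple of the other. -/
def rhoClose {n : ℕ} (ρ : ℕ) (Q R : Cube n) : Prop :=
  (2:ℝ) ^ (-(ρ:ℤ)) * Q.l ≤ R.l ∧ R.l ≤ (2:ℝ) ^ (ρ:ℤ) * Q.l ∧
  (∃ t : Pt n, Q ∈ gridCubes t ∧ R ∈ gridCubes t) ∧
  Touching Q R ∧ (Q.set ⊆ R.tri.set ∨ R.set ⊆ Q.tri.set)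

/-!
Writing `M f` for the maximal function over the intervals `J + γ` and their children, one has
`|Δ_{J+γ} f| ≤ 2 M f` everywhere. The boundary pieces `(J+γ)_λ` overlap at most twice, so the sum
over `γ` of `∫ |Δ_{J+γ} f|²` over these pieces is at most `8 ∫ (M f)² dω`. On the line every finite
family of intervals has a subfamily with the same union and overlap at most two, so `M` is of weak
type `(1,1)` and hence bounded on `L²(ω)`, whatever the measure `ω`. Thus the sum over `γ` is
`O(∫ f² dω)`, and dividing by the number `Λ ≳ 1/λ` of translations gives the bound `O(λ) ∫ f² dω`,
better than the bound with `√λ`.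
-/

section Covering

variable {ι α β : Type*}

/-- The covering property behind the maximal theorem: every finite subfamily of `S` has a further
subfamily with the same union, no point of which lies in more than `m` of its sets. -/
def HasBoundedOverlapSubcovers (S : ι → Set α) (m : ℕ) : Prop :=
  ∀ F : Finset ι, ∃ G ⊆ F, (⋃ i ∈ F, S i) ⊆ (⋃ i ∈ G, S i) ∧ ∀ x, {i ∈ G | x ∈ S i}.card ≤ m

lemma HasBoundedOverlapSubcovers.preimage {S : ι → Set β} {m : ℕ}
    (hS : HasBoundedOverlapSubcovers S m) (u : α → β) :
    HasBoundedOverlapSubcovers (fun i => u ⁻¹' S i) m := by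
  intro F
  obtain ⟨G, hGF, hcover, hoverlap⟩ := hS F
  refine ⟨G, hGF, ?_, fun x => hoverlap (u x)⟩
  simpa only [preimage_iUnion] using preimage_mono (f := u) hcover

variable [LinearOrder α]

lemma exists_forall_inter_Iic_subset {S : ι → Set α} {H : Finset ι} (hH : H.Nonempty) {x : α}
    (hS : ∀ i ∈ H, (S i).OrdConnected) (hx : ∀ i ∈ H, x ∈ S i) :
    ∃ a ∈ H, ∀ i ∈ H, S i ∩ Iic x ⊆ S a := by
  obtain ⟨a, ha, hmax⟩ := H.exists_maximalFor (fun i => S i ∩ Iic x) hH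
  refine ⟨a, ha, fun i hi y hy => ?_⟩
  by_contra hya
  have hai : S a ∩ Iic x ⊆ S i ∩ Iic x := fun z hz => by
    have hyz : y ≤ z := le_of_not_ge fun hzy => hya ((hS a ha).out hz.1 (hx a ha) ⟨hzy, hy.2⟩)
    exact ⟨(hS i hi).out hy.1 (hx i hi) ⟨hyz, hz.2⟩, hz.2⟩
  exact hya (hmax hi hai hy).1

lemma exists_forall_inter_Ici_subset {S : ι → Set α} {H : Finset ι} (hH : H.Nonempty) {x : α}
    (hS : ∀ i ∈ H, (S i).OrdConnected) (hx : ∀ i ∈ H, x ∈ S i) :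
    ∃ b ∈ H, ∀ i ∈ H, S i ∩ Ici x ⊆ S b :=
  exists_forall_inter_Iic_subset (α := αᵒᵈ) (S := fun i => OrderDual.ofDual ⁻¹' S i)
    (x := OrderDual.toDual x) hH (fun i hi => (hS i hi).dual) hx

lemma exists_pair_forall_subset_union {S : ι → Set α} {H : Finset ι} (hH : H.Nonempty) {x : α}
    (hS : ∀ i ∈ H, (S i).OrdConnected) (hx : ∀ i ∈ H, x ∈ S i) :
    ∃ a ∈ H, ∃ b ∈ H, ∀ i ∈ H, S i ⊆ S a ∪ S b := by
  obtain ⟨a, ha, hleft⟩ := exists_forall_inter_Iic_subset hH hS hx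
  obtain ⟨b, hb, hright⟩ := exists_forall_inter_Ici_subset hH hS hx
  exact ⟨a, ha, b, hb, fun i hi y hy => (le_total y x).imp
    (fun hyx => hleft i hi ⟨hy, hyx⟩) (fun hxy => hright i hi ⟨hy, hxy⟩)⟩

theorem hasBoundedOverlapSubcovers_of_ordConnected {S : ι → Set α}
    (hS : ∀ i, (S i).OrdConnected) : HasBoundedOverlapSubcovers S 2 := by
  intro F
  obtain ⟨G, hGF, hG⟩ := exists_minimal_le_of_wellFoundedLT
    (fun G : Finset ι => (⋃ i ∈ F, S i) ⊆ ⋃ i ∈ G, S i) F subset_rfl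
  refine ⟨G, hGF, hG.prop, fun x => ?_⟩
  rcases {i ∈ G | x ∈ S i}.eq_empty_or_nonempty with hempty | hne
  · simp [hempty]
  obtain ⟨a, ha, b, hb, hab⟩ := exists_pair_forall_subset_union hne (fun i _ => hS i)
    fun i hi => (Finset.mem_filter.1 hi).2
  suffices hsub : {i ∈ G | x ∈ S i} ⊆ {a, b} from
    (Finset.card_le_card hsub).trans Finset.card_le_two
  intro i hi
  by_contra hiab
  simp only [Finset.mem_insert, Finset.mem_singleton, not_or] at hiab
  have ha' : a ∈ G.erase i := Finset.mem_erase.2 ⟨Ne.symm hiab.1, (Finset.mem_filter.1 ha).1⟩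
  have hb' : b ∈ G.erase i := Finset.mem_erase.2 ⟨Ne.symm hiab.2, (Finset.mem_filter.1 hb).1⟩
  have hcover : (⋃ j ∈ G, S j) ⊆ ⋃ j ∈ G.erase i, S j := by
    refine iUnion₂_subset fun j hj => ?_
    by_cases hji : j = i
    · exact hji ▸ (hab i hi).trans (union_subset (subset_biUnion_of_mem (u := S) ha')
        (subset_biUnion_of_mem (u := S) hb'))
    · exact subset_biUnion_of_mem (u := S) (Finset.mem_erase.2 ⟨hji, hj⟩)
  exact Finset.notMem_erase i G
    (hG.le_of_le (hG.prop.trans hcover) (Finset.erase_subset i G) (Finset.mem_filter.1 hi).1)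

end Covering

section Maximal

variable {ι α : Type*}

/-- The finite maximal function `sup_{i ∈ F} c_i 1_{S_i}`, where `c_i` stands for the average of a
function over `S_i`. It takes values in `ℝ≥0`, so that it vanishes off `⋃_{i ∈ F} S_i`. -/
def finiteMaximal (S : ι → Set α) (c : ι → ℝ≥0) (F : Finset ι) (x : α) : ℝ≥0 :=
  F.sup fun i => (S i).indicator (fun _ => c i) x

lemma le_finiteMaximal {S : ι → Set α} (c : ι → ℝ≥0) {F : Finset ι} {i : ι} (hi : i ∈ F) {x : α}
    (hx : x ∈ S i) : c i ≤ finiteMaximal S c F x :=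
  (indicator_of_mem hx fun _ => c i).ge.trans
    (Finset.le_sup (f := fun i => (S i).indicator (fun _ => c i) x) hi)

lemma setOf_lt_finiteMaximal (S : ι → Set α) (c : ι → ℝ≥0) (F : Finset ι) (t : ℝ≥0) :
    {x | t < finiteMaximal S c F x} = ⋃ i ∈ ({i ∈ F | t < c i} : Finset ι), S i := by
  ext x
  simp only [finiteMaximal, Finset.lt_sup_iff, indicator_apply, mem_ofPred_eq, mem_iUnion,
    Finset.mem_filter, exists_prop, and_assoc]
  refine exists_congr fun i => and_congr_right fun _ => ?_
  split_ifs with hx <;> simp [hx]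

variable [MeasurableSpace α] {μ : Measure α}

lemma measurable_finiteMaximal {S : ι → Set α} (hS : ∀ i, MeasurableSet (S i)) (c : ι → ℝ≥0)
    (F : Finset ι) : Measurable (finiteMaximal S c F) := by
  have hsup : finiteMaximal S c F = F.sup fun i => (S i).indicator fun _ => c i :=
    funext fun x => (Finset.sup_apply F _ x).symm
  rw [hsup]
  exact Finset.sup_induction measurable_const (fun _ hu _ hv => hu.sup hv)
    fun i _ => measurable_const.indicator (hS i)

lemma sum_setLIntegral_le_mul_lintegral {S : ι → Set α} {F : Finset ι} {m : ℕ}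
    (hS : ∀ i ∈ F, MeasurableSet (S i)) (hm : ∀ x, {i ∈ F | x ∈ S i}.card ≤ m)
    {f : α → ℝ≥0∞} (hf : Measurable f) :
    ∑ i ∈ F, ∫⁻ x in S i, f x ∂μ ≤ m * ∫⁻ x, f x ∂μ := by
  calc ∑ i ∈ F, ∫⁻ x in S i, f x ∂μ = ∑ i ∈ F, ∫⁻ x, (S i).indicator f x ∂μ :=
        Finset.sum_congr rfl fun i hi => (lintegral_indicator (hS i hi) f).symm
    _ = ∫⁻ x, ∑ i ∈ F, (S i).indicator f x ∂μ :=
        (lintegral_finsetSum' F fun i hi => (hf.indicator (hS i hi)).aemeasurable).symm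
    _ = ∫⁻ x, ({i ∈ F | x ∈ S i}.card : ℝ≥0∞) * f x ∂μ := by
        simp only [indicator_apply, ← Finset.sum_filter, Finset.sum_const, nsmul_eq_mul]
    _ ≤ ∫⁻ x, m * f x ∂μ := by
        gcongr with x
        exact hm x
    _ = m * ∫⁻ x, f x ∂μ := lintegral_const_mul _ hf

lemma mul_measure_biUnion_le {S : ι → Set α} {m : ℕ} (hS : ∀ i, MeasurableSet (S i))
    (hm : HasBoundedOverlapSubcovers S m) {F : Finset ι} {t : ℝ≥0∞} {f : α → ℝ≥0∞}
    (hf : Measurable f) (ht : ∀ i ∈ F, t * μ (S i) ≤ ∫⁻ x in S i, f x ∂μ) :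
    t * μ (⋃ i ∈ F, S i) ≤ m * ∫⁻ x, f x ∂μ := by
  obtain ⟨G, hGF, hcover, hoverlap⟩ := hm F
  calc t * μ (⋃ i ∈ F, S i) ≤ t * ∑ i ∈ G, μ (S i) := by
        gcongr
        exact (measure_mono hcover).trans (measure_biUnion_finset_le G S)
    _ = ∑ i ∈ G, t * μ (S i) := Finset.mul_sum ..
    _ ≤ ∑ i ∈ G, ∫⁻ x in S i, f x ∂μ := Finset.sum_le_sum fun i hi => ht i (hGF hi)
    _ ≤ m * ∫⁻ x, f x ∂μ := sum_setLIntegral_le_mul_lintegral (fun i _ => hS i) hoverlap hf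

/-- The part of `f` below `t / 2` contributes at most half of the lower bound for its integral. -/
lemma mul_measure_le_setLIntegral_indicator {s : Set α} {f : α → ℝ≥0} {t : ℝ≥0} (hs : μ s ≠ ⊤)
    (hf : Measurable f) (ht : t * μ s ≤ ∫⁻ x in s, f x ∂μ) :
    t * μ s ≤ ∫⁻ x in s, {x | t < 2 * f x}.indicator (fun x => 2 * (f x : ℝ≥0∞)) x ∂μ := by
  set v : ℝ≥0∞ := ∫⁻ x in s, {x | t < 2 * f x}.indicator (fun x => 2 * (f x : ℝ≥0∞)) x ∂μ
  have hpoint (x : α) :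
      2 * (f x : ℝ≥0∞) ≤ t + {x | t < 2 * f x}.indicator (fun x => 2 * (f x : ℝ≥0∞)) x := by
    rcases lt_or_ge t (2 * f x) with hx | hx
    · simp [indicator_of_mem (show x ∈ {x | t < 2 * f x} from hx)]
    · exact le_add_right (mod_cast hx)
  have hdouble : t * μ s + t * μ s ≤ t * μ s + v :=
    calc t * μ s + t * μ s = 2 * (t * μ s) := (two_mul _).symm
      _ ≤ 2 * ∫⁻ x in s, f x ∂μ := by gcongr
      _ = ∫⁻ x in s, 2 * (f x : ℝ≥0∞) ∂μ := (lintegral_const_mul _ hf.coe_nnreal_ennreal).symm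
      _ ≤ ∫⁻ x in s, (t + {x | t < 2 * f x}.indicator (fun x => 2 * (f x : ℝ≥0∞)) x) ∂μ :=
        lintegral_mono hpoint
      _ = t * μ s + v := by
        rw [lintegral_add_left measurable_const, setLIntegral_const]
  exact (ENNReal.add_le_add_iff_left (ENNReal.mul_ne_top ENNReal.coe_ne_top hs)).1 hdouble

theorem mul_measure_lt_finiteMaximal_le {S : ι → Set α} {m : ℕ} (hS : ∀ i, MeasurableSet (S i))
    (hm : HasBoundedOverlapSubcovers S m) (hfin : ∀ i, μ (S i) ≠ ⊤) {f : α → ℝ≥0}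
    (hf : Measurable f) {c : ι → ℝ≥0} (hc : ∀ i, c i * μ (S i) ≤ ∫⁻ x in S i, f x ∂μ)
    (F : Finset ι) (t : ℝ≥0) :
    t * μ {x | t < finiteMaximal S c F x} ≤ ∫⁻ x in {x | t < 2 * f x}, m * (2 * f x) ∂μ := by
  have hlarge : MeasurableSet {x | t < 2 * f x} :=
    measurableSet_lt measurable_const (hf.const_mul 2)
  have hf2 : Measurable fun x => 2 * (f x : ℝ≥0∞) := hf.coe_nnreal_ennreal.const_mul 2
  rw [setOf_lt_finiteMaximal, lintegral_const_mul _ hf2, ← lintegral_indicator hlarge]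
  refine mul_measure_biUnion_le hS hm (hf2.indicator hlarge) fun i hi => ?_
  refine mul_measure_le_setLIntegral_indicator (hfin i) hf (le_trans ?_ (hc i))
  gcongr
  exact (Finset.mem_filter.1 hi).2.le

lemma lintegral_rpow_nnreal_eq {g : α → ℝ≥0} (hg : Measurable g) (ν : Measure α) {p : ℝ}
    (hp : 0 < p) : ∫⁻ x, (g x : ℝ≥0∞) ^ p ∂ν =
      ENNReal.ofReal p * ∫⁻ t in Ioi (0 : ℝ), ν {x | t < g x} * ENNReal.ofReal (t ^ (p - 1)) := by
  rw [← lintegral_rpow_eq_lintegral_meas_lt_mul ν (ae_of_all _ fun x => (g x).coe_nonneg)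
    hg.coe_nnreal_real.aemeasurable hp]
  simp only [← ENNReal.ofReal_rpow_of_nonneg (NNReal.coe_nonneg _) hp.le,
    ENNReal.ofReal_coe_nnreal]

/-- Marcinkiewicz interpolation: integrate `hweak` against `t ^ (p - 2) dt` and use the layer cake
formula on both sides. -/
lemma lintegral_rpow_le_of_mul_measure_lt_le {g h : α → ℝ≥0} (hg : Measurable g)
    (hh : Measurable h) {w : α → ℝ≥0∞} (hw : Measurable w) {p : ℝ} (hp : 1 < p)
    (hweak : ∀ t : ℝ≥0, t * μ {x | t < g x} ≤ ∫⁻ x in {x | t < h x}, w x ∂μ) :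
    ∫⁻ x, (g x : ℝ≥0∞) ^ p ∂μ ≤
      ENNReal.ofReal (p / (p - 1)) * ∫⁻ x, w x * (h x : ℝ≥0∞) ^ (p - 1) ∂μ := by
  have hp0 : 0 < p - 1 := sub_pos.2 hp
  have hlevel {t : ℝ} (ht : t ∈ Ioi (0 : ℝ)) : μ {x | t < g x} * ENNReal.ofReal (t ^ (p - 1)) ≤
      μ.withDensity w {x | t < h x} * ENNReal.ofReal (t ^ (p - 1 - 1)) := by
    lift t to ℝ≥0 using le_of_lt ht
    have hh' : MeasurableSet {x | t < h x} := measurableSet_lt measurable_const hh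
    have hpow : (t : ℝ) ^ (p - 1) = t * (t : ℝ) ^ (p - 1 - 1) := by
      rw [← Real.rpow_one_add' t.coe_nonneg (by linarith)]; ring_nf
    simp only [NNReal.coe_lt_coe]
    rw [hpow, ENNReal.ofReal_mul t.coe_nonneg, ENNReal.ofReal_coe_nnreal, withDensity_apply _ hh',
      ← mul_assoc, mul_comm _ (t : ℝ≥0∞)]
    gcongr
    exact hweak t
  calc ∫⁻ x, (g x : ℝ≥0∞) ^ p ∂μ
      = ENNReal.ofReal p *
          ∫⁻ t in Ioi (0 : ℝ), μ {x | t < g x} * ENNReal.ofReal (t ^ (p - 1)) :=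
        lintegral_rpow_nnreal_eq hg μ (by linarith)
    _ ≤ ENNReal.ofReal p * ∫⁻ t in Ioi (0 : ℝ),
          μ.withDensity w {x | t < h x} * ENNReal.ofReal (t ^ (p - 1 - 1)) := by
        gcongr ENNReal.ofReal p * ?_
        exact setLIntegral_mono' measurableSet_Ioi fun t ht => hlevel ht
    _ = ENNReal.ofReal (p / (p - 1)) * (ENNReal.ofReal (p - 1) * ∫⁻ t in Ioi (0 : ℝ),
          μ.withDensity w {x | t < h x} * ENNReal.ofReal (t ^ (p - 1 - 1))) := by
        rw [← mul_assoc, ← ENNReal.ofReal_mul (by positivity), div_mul_cancel₀ _ hp0.ne']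
    _ = ENNReal.ofReal (p / (p - 1)) * ∫⁻ x, w x * (h x : ℝ≥0∞) ^ (p - 1) ∂μ := by
        rw [← lintegral_rpow_nnreal_eq hh _ hp0, lintegral_withDensity_eq_lintegral_mul _ hw
          (hh.coe_nnreal_ennreal.pow_const _)]
        simp only [Pi.mul_apply]

theorem lintegral_finiteMaximal_rpow_le {S : ι → Set α} {m : ℕ} (hS : ∀ i, MeasurableSet (S i))
    (hm : HasBoundedOverlapSubcovers S m) (hfin : ∀ i, μ (S i) ≠ ⊤) {f : α → ℝ≥0}
    (hf : Measurable f) {c : ι → ℝ≥0} (hc : ∀ i, c i * μ (S i) ≤ ∫⁻ x in S i, f x ∂μ)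
    (F : Finset ι) {p : ℝ} (hp : 1 < p) :
    ∫⁻ x, (finiteMaximal S c F x : ℝ≥0∞) ^ p ∂μ ≤
      ENNReal.ofReal (p / (p - 1)) * (m * 2 ^ p) * ∫⁻ x, (f x : ℝ≥0∞) ^ p ∂μ := by
  have hf2 : Measurable fun x => 2 * f x := hf.const_mul 2
  have hpow (x : α) : m * (2 * (f x : ℝ≥0∞)) * ((2 * f x : ℝ≥0) : ℝ≥0∞) ^ (p - 1) =
      m * 2 ^ p * (f x : ℝ≥0∞) ^ p := by
    have hsplit : (2 * (f x : ℝ≥0∞)) * (2 * (f x : ℝ≥0∞)) ^ (p - 1) = (2 * (f x : ℝ≥0∞)) ^ p := by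
      simpa using (ENNReal.rpow_add_of_nonneg (x := 2 * (f x : ℝ≥0∞)) 1 (p - 1) zero_le_one
        (sub_nonneg.2 hp.le)).symm
    rw [ENNReal.coe_mul, ENNReal.coe_ofNat, mul_assoc, hsplit,
      ENNReal.mul_rpow_of_nonneg _ _ (by linarith), mul_assoc]
  refine (lintegral_rpow_le_of_mul_measure_lt_le (measurable_finiteMaximal hS c F) hf2
    (by fun_prop) hp (mul_measure_lt_finiteMaximal_le hS hm hfin hf hc F)).trans_eq ?_
  simp only [hpow]
  rw [lintegral_const_mul _ (hf.coe_nnreal_ennreal.pow_const p), ← mul_assoc]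

end Maximal

section Cubes

variable {n : ℕ}

lemma Cube.measurableSet_set (Q : Cube n) : MeasurableSet Q.set := by
  have hset : Q.set = ⋂ i, {x | Q.c i ≤ x i} ∩ {x | x i < Q.c i + Q.l} := by
    ext x; simp [Cube.set]
  rw [hset]
  exact .iInter fun i => (measurableSet_le (by fun_prop) (by fun_prop)).inter
    (measurableSet_lt (by fun_prop) (by fun_prop))

lemma Cube.measure_set_ne_top (μ : Measure (Pt n)) [IsLocallyFiniteMeasure μ] (Q : Cube n) :
    μ Q.set ≠ ⊤ := by
  have hcompact : IsCompact (WithLp.toLp 2 '' Icc (fun i => Q.c i) fun i => Q.c i + Q.l) :=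
    isCompact_Icc.image (PiLp.continuous_toLp 2 _)
  refine ((measure_mono fun x hx => ?_).trans_lt hcompact.measure_lt_top).ne
  exact ⟨x.ofLp, ⟨fun i => (hx i).1, fun i => (hx i).2.le⟩, rfl⟩

lemma enorm_cubeAvg_mul_measure_le {μ : Measure (Pt n)} {s : Set (Pt n)} (hs : μ s ≠ ⊤)
    (f : Pt n → ℝ) : ‖cubeAvg μ s f‖ₑ * μ s ≤ ∫⁻ x in s, ‖f x‖ₑ ∂μ := by
  have hmass : ‖(μ s).toReal‖ₑ = μ s := by
    rw [Real.enorm_of_nonneg ENNReal.toReal_nonneg, ENNReal.ofReal_toReal hs]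
  have hcancel : ‖cubeAvg μ s f * (μ s).toReal‖ ≤ ‖∫ x in s, f x ∂μ‖ := by
    rcases eq_or_ne (μ s).toReal 0 with h0 | h0
    · simp [h0]
    · rw [cubeAvg, div_mul_cancel₀ _ h0]
  calc ‖cubeAvg μ s f‖ₑ * μ s = ‖cubeAvg μ s f * (μ s).toReal‖ₑ := by rw [enorm_mul, hmass]
    _ ≤ ‖∫ x in s, f x ∂μ‖ₑ := enorm_le_iff_norm_le.2 hcancel
    _ ≤ ∫⁻ x in s, ‖f x‖ₑ ∂μ := enorm_integral_le_lintegral_enorm f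

lemma Cube.child_set_subset (Q : Cube n) (e : Fin n → Bool) : (Q.child e).set ⊆ Q.set := by
  intro x hx i
  have hxi := hx i
  have hl := Q.lpos
  simp only [Cube.child] at hxi
  split_ifs at hxi <;> constructor <;> linarith

lemma Cube.disjoint_child_set (Q : Cube n) {e e' : Fin n → Bool} (he : e ≠ e') :
    Disjoint (Q.child e).set (Q.child e').set := by
  obtain ⟨i, hi⟩ := Function.ne_iff.1 he
  refine Set.disjoint_left.2 fun x hx hx' => ?_
  have hxi := hx i
  have hxi' := hx' i
  simp only [Cube.child] at hxi hxi'
  split_ifs at hxi hxi' with h h' h' <;> first | linarith | exact hi (by simp only [h, h'])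

lemma haarDiff_of_mem_child (μ : Measure (Pt n)) (Q : Cube n) (f : Pt n → ℝ)
    {e : Fin n → Bool} {x : Pt n} (hx : x ∈ (Q.child e).set) :
    haarDiff μ Q f x = cubeAvg μ (Q.child e).set f - cubeAvg μ Q.set f := by
  rw [haarDiff, Finset.sum_eq_single e, indicator_of_mem hx]
  · exact fun e' _ he' =>
      indicator_of_notMem (Set.disjoint_left.1 (Q.disjoint_child_set he'.symm) hx) _
  · simp

lemma haarDiff_of_forall_notMem_child (μ : Measure (Pt n)) {Q : Cube n} (f : Pt n → ℝ) {x : Pt n}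
    (hx : ∀ e, x ∉ (Q.child e).set) : haarDiff μ Q f x = 0 :=
  Finset.sum_eq_zero fun e _ => indicator_of_notMem (hx e) _

lemma nnnorm_haarDiff_le (μ : Measure (Pt n)) {Q : Cube n} (f : Pt n → ℝ) {F : Finset (Cube n)}
    (hQ : Q ∈ F) (hchild : ∀ e, Q.child e ∈ F) (x : Pt n) :
    ‖haarDiff μ Q f x‖₊ ≤ 2 * finiteMaximal Cube.set (fun Q => ‖cubeAvg μ Q.set f‖₊) F x := by
  by_cases hx : ∃ e, x ∈ (Q.child e).set
  · obtain ⟨e, he⟩ := hx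
    rw [haarDiff_of_mem_child μ Q f he, two_mul]
    exact (nnnorm_sub_le _ _).trans <|
      add_le_add (le_finiteMaximal (fun Q : Cube n => ‖cubeAvg μ Q.set f‖₊) (hchild e) he)
        (le_finiteMaximal (fun Q : Cube n => ‖cubeAvg μ Q.set f‖₊) hQ (Q.child_set_subset e he))
  · simp [haarDiff_of_forall_notMem_child μ f (not_exists.1 hx)]

lemma Cube.exists_coord_of_mem_frontier {Q : Cube n} {y : Pt n} (hy : y ∈ frontier Q.set) :
    ∃ i, y i ≤ Q.c i ∨ Q.c i + Q.l ≤ y i := by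
  by_contra! hinside
  have hopen : IsOpen {z : Pt n | ∀ i, Q.c i < z i ∧ z i < Q.c i + Q.l} := by
    simp only [ofPred_forall, ofPred_and]
    exact isOpen_iInter_of_finite fun i =>
      (isOpen_lt (by fun_prop) (by fun_prop)).inter (isOpen_lt (by fun_prop) (by fun_prop))
  exact hy.2 (interior_maximal (fun z hz i => ⟨(hz i).1.le, (hz i).2⟩) hopen hinside)

lemma Cube.frontier_set_nonempty [NeZero n] (Q : Cube n) : (frontier Q.set).Nonempty := by
  refine nonempty_frontier_iff.2 ⟨⟨Q.c, fun i => ⟨le_rfl, lt_add_of_pos_right _ Q.lpos⟩⟩, ?_⟩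
  refine (ne_univ_iff_exists_notMem _).2 ⟨WithLp.toLp 2 fun i => Q.c i + Q.l, fun hmem => ?_⟩
  exact (hmem 0).2.false

lemma Cube.exists_coord_of_notMem_inn [NeZero n] {Q : Cube n} {lam : ℝ} {x : Pt n}
    (hx : x ∈ Q.set) (hinn : x ∉ Q.inn lam) :
    ∃ i, x i ≤ Q.c i + lam * Q.l ∨ Q.c i + Q.l ≤ x i + lam * Q.l := by
  obtain ⟨y, hy, hdist⟩ := isClosed_frontier.exists_infDist_eq_dist Q.frontier_set_nonempty x
  have hclose : dist x y ≤ lam * Q.l := by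
    rw [← hdist]
    exact not_lt.1 fun hlt => hinn ⟨hx, hlt⟩
  obtain ⟨i, hi⟩ := exists_coord_of_mem_frontier hy
  have hcoord : |x i - y i| ≤ lam * Q.l :=
    (PiLp.norm_apply_le (x - y) i).trans ((dist_eq_norm x y).symm.trans_le hclose)
  obtain ⟨hlower, hupper⟩ := abs_le.1 hcoord
  exact ⟨i, hi.imp (fun h => by linarith) (fun h => by linarith)⟩

lemma Cube.measurableSet_inn (Q : Cube n) (lam : ℝ) : MeasurableSet (Q.inn lam) :=
  Q.measurableSet_set.inter
    (measurableSet_lt measurable_const (Metric.continuous_infDist_pt _).measurable)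

lemma lintegral_ofReal_indic_sq (μ : Measure (Pt n)) {s : Set (Pt n)}
    (hs : MeasurableSet s) : ∫⁻ x, ENNReal.ofReal (indic s x ^ 2) ∂μ = μ s := by
  rw [← lintegral_indicator_one hs]
  refine lintegral_congr fun x => ?_
  by_cases hx : x ∈ s <;> simp [indic, hx]

end Cubes

section Line

lemma Cube.hasBoundedOverlapSubcovers_set :
    HasBoundedOverlapSubcovers (Cube.set : Cube 1 → Set (Pt 1)) 2 := by
  have hset : (Cube.set : Cube 1 → Set (Pt 1)) =
      fun Q => (fun x : Pt 1 => x 0) ⁻¹' Ico (Q.c 0) (Q.c 0 + Q.l) := by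
    ext Q x
    simp [Cube.set]
  rw [hset]
  exact (hasBoundedOverlapSubcovers_of_ordConnected fun Q : Cube 1 =>
    (ordConnected_Ico : (Ico (Q.c 0) (Q.c 0 + Q.l)).OrdConnected)).preimage _

lemma ofReal_sq_eq_nnnorm_rpow (r : ℝ) : ENNReal.ofReal (r ^ 2) = (‖r‖₊ : ℝ≥0∞) ^ (2 : ℝ) := by
  rw [← sq_abs, ENNReal.ofReal_pow (abs_nonneg r), ENNReal.rpow_two, ← enorm_eq_nnnorm,
    Real.enorm_eq_ofReal_abs]

variable (ω : Measure (Pt 1)) [IsLocallyFiniteMeasure ω] {f : Pt 1 → ℝ}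

theorem lintegral_finiteMaximal_cubeAvg_sq_le (hf : Measurable f) (F : Finset (Cube 1)) :
    ∫⁻ x, (finiteMaximal Cube.set (fun Q => ‖cubeAvg ω Q.set f‖₊) F x : ℝ≥0∞) ^ (2 : ℝ) ∂ω ≤
      16 * ∫⁻ x, ENNReal.ofReal (f x ^ 2) ∂ω := by
  have hmax := lintegral_finiteMaximal_rpow_le Cube.measurableSet_set
    Cube.hasBoundedOverlapSubcovers_set (Cube.measure_set_ne_top ω) hf.nnnorm
    (fun Q => enorm_cubeAvg_mul_measure_le (Q.measure_set_ne_top ω) f) F one_lt_two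
  have hconst : ENNReal.ofReal (2 / (2 - 1)) * ((2 : ℕ) * 2 ^ (2 : ℝ)) = 16 := by
    norm_num
  simpa only [hconst, ofReal_sq_eq_nnnorm_rpow] using hmax

theorem sum_setLIntegral_haarDiff_sq_le (hf : Measurable f) {ι : Type*} (Q : ι → Cube 1)
    {A : ι → Set (Pt 1)} {F : Finset ι} {m : ℕ} (hA : ∀ i ∈ F, MeasurableSet (A i))
    (hm : ∀ x, {i ∈ F | x ∈ A i}.card ≤ m) :
    ∑ i ∈ F, ∫⁻ x in A i, ENNReal.ofReal (haarDiff ω (Q i) f x ^ 2) ∂ω ≤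
      m * (64 * ∫⁻ x, ENNReal.ofReal (f x ^ 2) ∂ω) := by
  set E : Finset (Cube 1) := F.image Q ∪ (F ×ˢ Finset.univ).image fun ie => (Q ie.1).child ie.2
  set M : Pt 1 → ℝ≥0 := finiteMaximal Cube.set (fun Q => ‖cubeAvg ω Q.set f‖₊) E
  have hM : Measurable fun x => 4 * (M x : ℝ≥0∞) ^ (2 : ℝ) :=
    ((measurable_finiteMaximal Cube.measurableSet_set _ E).coe_nnreal_ennreal.pow_const
      _).const_mul 4
  have hpoint {i : ι} (hi : i ∈ F) (x : Pt 1) :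
      ENNReal.ofReal (haarDiff ω (Q i) f x ^ 2) ≤ 4 * (M x : ℝ≥0∞) ^ (2 : ℝ) := by
    have hle : ‖haarDiff ω (Q i) f x‖₊ ≤ 2 * M x := by
      refine nnnorm_haarDiff_le ω f ?_ (fun e => ?_) x
      · exact Finset.mem_union_left _ (Finset.mem_image_of_mem Q hi)
      · exact Finset.mem_union_right _ (Finset.mem_image.2 ⟨(i, e), by simp [hi], rfl⟩)
    calc ENNReal.ofReal (haarDiff ω (Q i) f x ^ 2)
        = (‖haarDiff ω (Q i) f x‖₊ : ℝ≥0∞) ^ (2 : ℝ) := ofReal_sq_eq_nnnorm_rpow _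
      _ ≤ (2 * M x : ℝ≥0∞) ^ (2 : ℝ) := by
          gcongr
          exact_mod_cast hle
      _ = 4 * (M x : ℝ≥0∞) ^ (2 : ℝ) := by
          rw [ENNReal.mul_rpow_of_nonneg _ _ zero_le_two]
          norm_num
  calc ∑ i ∈ F, ∫⁻ x in A i, ENNReal.ofReal (haarDiff ω (Q i) f x ^ 2) ∂ω
      ≤ ∑ i ∈ F, ∫⁻ x in A i, 4 * (M x : ℝ≥0∞) ^ (2 : ℝ) ∂ω :=
        Finset.sum_le_sum fun i hi => lintegral_mono (hpoint hi)
    _ ≤ m * ∫⁻ x, 4 * (M x : ℝ≥0∞) ^ (2 : ℝ) ∂ω := sum_setLIntegral_le_mul_lintegral hA hm hM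
    _ ≤ m * (64 * ∫⁻ x, ENNReal.ofReal (f x ^ 2) ∂ω) := by
        gcongr
        rw [lintegral_const_mul' _ _ (by norm_num), show (64 : ℝ≥0∞) = 4 * 16 by norm_num,
          mul_assoc]
        gcongr
        exact lintegral_finiteMaximal_cubeAvg_sq_le ω hf E

/-- The boundary piece `Q_λ^{left} = Q_- \ Q_λ` (for `b = false`) or `Q_λ^{right} = Q_+ \ Q_λ`
(for `b = true`) of an interval `Q`. -/
def Cube.boundaryPiece (Q : Cube 1) (b : Bool) (lam : ℝ) : Set (Pt 1) :=
  (Q.child fun _ => b).set \ Q.inn lam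

/-- The `k`-th translate `J + γ` in the arithmetic progression of step `λ ℓ(J)`. -/
def Cube.shift (J : Cube 1) (lam : ℝ) (k : ℕ) : Cube 1 :=
  J.trans (WithLp.toLp 2 fun _ => (k : ℝ) * (lam * J.l))

lemma Cube.measurableSet_boundaryPiece (Q : Cube 1) (b : Bool) (lam : ℝ) :
    MeasurableSet (Q.boundaryPiece b lam) :=
  (Q.child _).measurableSet_set.diff (Q.measurableSet_inn lam)

lemma Cube.coord_mem_Icc_of_mem_boundaryPiece {Q : Cube 1} {b : Bool} {lam : ℝ} {x : Pt 1}
    (hx : x ∈ Q.boundaryPiece b lam) :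
    x 0 ∈ Icc (Q.c 0 + if b then Q.l - lam * Q.l else 0)
      (Q.c 0 + (if b then Q.l - lam * Q.l else 0) + lam * Q.l) := by
  obtain ⟨i, hi⟩ := exists_coord_of_notMem_inn (Q.child_set_subset _ hx.1) hx.2
  have hx0 := hx.1 0
  rw [Fin.fin_one_eq_zero i] at hi
  simp only [Cube.child] at hx0
  cases b <;> simp only [Bool.false_eq_true, if_true, if_false] at hx0 ⊢ <;>
    constructor <;> rcases hi with hi | hi <;> linarith

lemma card_filter_mem_Icc_le_two {s : ℝ} (hs : 0 < s) (a y : ℝ) (F : Finset ℕ) :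
    ({k ∈ F | y ∈ Icc (a + k * s) (a + k * s + s)} : Finset ℕ).card ≤ 2 := by
  set u := (y - a) / s
  have hsub : ({k ∈ F | y ∈ Icc (a + k * s) (a + k * s + s)} : Finset ℕ) ⊆
      Finset.Icc (⌈u⌉₊ - 1) ⌊u⌋₊ := by
    intro k hk
    obtain ⟨hlower, hupper⟩ := (Finset.mem_filter.1 hk).2
    have hku : k ≤ u := (le_div_iff₀ hs).2 (by linarith)
    have huk : u ≤ (k + 1 : ℕ) := (div_le_iff₀ hs).2 (by push_cast; linarith)
    exact Finset.mem_Icc.2 ⟨Nat.sub_le_iff_le_add.2 (Nat.ceil_le.2 huk), Nat.le_floor hku⟩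
  have hcard := Finset.card_le_card hsub
  have hfloor := Nat.floor_le_ceil u
  rw [Nat.card_Icc] at hcard
  omega

lemma Cube.card_filter_mem_boundaryPiece_shift_le_two (J : Cube 1) (b : Bool) {lam : ℝ}
    (hlam : 0 < lam) (F : Finset ℕ) (x : Pt 1) :
    {k ∈ F | x ∈ (J.shift lam k).boundaryPiece b lam}.card ≤ 2 := by
  refine (Finset.card_le_card (Finset.monotone_filter_right F fun k _ hk => ?_)).trans
    (card_filter_mem_Icc_le_two (mul_pos hlam J.lpos)
      (J.c 0 + if b then J.l - lam * J.l else 0) (x 0) F)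
  simpa only [Cube.shift, Cube.trans, add_right_comm] using coord_mem_Icc_of_mem_boundaryPiece hk

theorem oneDimSurgeryEstimate_general (hf : Measurable f) (J : Cube 1) (b : Bool) {lam K : ℝ}
    (hlam : 0 < lam) {N : ℕ} (hN : 1 ≤ K * (N * lam)) :
    (∑ k ∈ Finset.range N, ∫⁻ x in (J.shift lam k).boundaryPiece b lam,
        ENNReal.ofReal (haarDiff ω (J.shift lam k) f x ^ 2) ∂ω) / N ≤
      ENNReal.ofReal (128 * K * lam) * ∫⁻ x, ENNReal.ofReal (f x ^ 2) ∂ω := by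
  have hsum := sum_setLIntegral_haarDiff_sq_le ω hf (J.shift lam)
    (fun k _ => (J.shift lam k).measurableSet_boundaryPiece b lam)
    (J.card_filter_mem_boundaryPiece_shift_le_two b hlam (Finset.range N))
  have hconst : (2 : ℕ) * 64 ≤ ENNReal.ofReal (128 * K * lam) * N := by
    calc (2 : ℕ) * 64 = ENNReal.ofReal 128 := by norm_num
      _ ≤ ENNReal.ofReal (128 * K * lam * N) := ENNReal.ofReal_le_ofReal (by linarith)
      _ = ENNReal.ofReal (128 * K * lam) * N := by
        rw [ENNReal.ofReal_mul' N.cast_nonneg, ENNReal.ofReal_natCast]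
  refine ENNReal.div_le_of_le_mul (hsum.trans ?_)
  rw [mul_right_comm, ← mul_assoc]
  exact mul_le_mul' hconst le_rfl

end Line

/-- **One-dimensional surgery estimate.** Let `ω` be locally finite on `ℝ`, `J, R` be
`ρ`-close intervals, `λ ∈ (0,1/2)`. Averaging over `Λ` translations of step `λℓ(J)`
covering an interval of length comparable to `ℓ(R)`,
`(1/Λ) Σ_γ ∫_{(J+γ)_λ^{left}} |Δ_{J+γ}^ω 1_R|² dω ≤ C √λ ω(R)` with `C` depending only
on `ρ`; and the same for the right boundary pieces. -/
theorem oneDimSurgeryEstimate (ρ : ℕ) :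
    ∃ C : ℝ, 0 < C ∧
      ∀ ω : Measure (Pt 1), IsLocallyFiniteMeasure ω →
      ∀ J R : Cube 1, (2:ℝ) ^ (-(ρ:ℤ)) * R.l ≤ J.l → J.l ≤ (2:ℝ) ^ (ρ:ℤ) * R.l →
      (J.set ⊆ R.tri.set ∨ R.set ⊆ J.tri.set) →
      (Touching J R ∨ J.set ⊆ R.set ∨ R.set ⊆ J.set) →
      ∀ lam : ℝ, 0 < lam → lam < 1/2 →
      ∀ Lam : ℕ, 0 < Lam → R.l ≤ (Lam : ℝ) * (lam * J.l) →
      (Lam : ℝ) * (lam * J.l) ≤ (2:ℝ) ^ (ρ:ℤ) * R.l →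
      ((∑ k ∈ Finset.range Lam,
            ∫⁻ x in ((J.trans (WithLp.toLp 2 (fun _ => (k:ℝ) * (lam * J.l)) : Pt 1)).child fun _ => false).set \
                (J.trans (WithLp.toLp 2 (fun _ => (k:ℝ) * (lam * J.l)) : Pt 1)).inn lam,
              ENNReal.ofReal
                ((haarDiff ω (J.trans (WithLp.toLp 2 (fun _ => (k:ℝ) * (lam * J.l)) : Pt 1)) (indic R.set) x) ^ 2) ∂ω) /
            (Lam : ℝ≥0∞)
          ≤ ENNReal.ofReal (C * Real.sqrt lam) * ω R.set) ∧
      ((∑ k ∈ Finset.range Lam,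
            ∫⁻ x in ((J.trans (WithLp.toLp 2 (fun _ => (k:ℝ) * (lam * J.l)) : Pt 1)).child fun _ => true).set \
                (J.trans (WithLp.toLp 2 (fun _ => (k:ℝ) * (lam * J.l)) : Pt 1)).inn lam,
              ENNReal.ofReal
                ((haarDiff ω (J.trans (WithLp.toLp 2 (fun _ => (k:ℝ) * (lam * J.l)) : Pt 1)) (indic R.set) x) ^ 2) ∂ω) /
            (Lam : ℝ≥0∞)
          ≤ ENNReal.ofReal (C * Real.sqrt lam) * ω R.set) := by
  refine ⟨128 * 2 ^ (ρ : ℤ), by positivity, fun ω _ J R _ hJR _ _ lam hlam hlam' N _ hRN _ => ?_⟩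
  have hN : 1 ≤ (2 : ℝ) ^ (ρ : ℤ) * (N * lam) := by
    refine le_of_mul_le_mul_right ?_ R.lpos
    calc 1 * R.l ≤ N * lam * J.l := by linarith
      _ ≤ N * lam * (2 ^ (ρ : ℤ) * R.l) := by gcongr
      _ = 2 ^ (ρ : ℤ) * (N * lam) * R.l := by ring
  have hsqrt : lam ≤ √lam :=
    Real.le_sqrt_of_sq_le (pow_le_of_le_one hlam.le (by linarith) two_ne_zero)
  have hC : ENNReal.ofReal (128 * 2 ^ (ρ : ℤ) * lam) ≤
      ENNReal.ofReal (128 * 2 ^ (ρ : ℤ) * √lam) := by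
    gcongr
  have hindic : Measurable (indic R.set) := measurable_one.indicator R.measurableSet_set
  rw [← lintegral_ofReal_indic_sq ω R.measurableSet_set]
  have hbound (b : Bool) :=
    (oneDimSurgeryEstimate_general ω hindic J b hlam hN).trans (mul_le_mul' hC le_rfl)
  exact ⟨hbound false, hbound true⟩
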